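/- Let Γ' ≤ Λ(Γ_k) be a nontrivial subgroup of translations of Γ_k. For k = 3, 4, 6 the dimension of the space of restrictions to Γ' of discrete faithful representations of Γ_k is 2; for k = 2 it is 2r, where r is the rank of the free abelian group Γ'. In particular this dimension is always even. -/

import Mathlib

open Matrix

abbrev V2 := Fin 2 → ℝ
abbrev Mat2 := Matrix (Fin 2) (Fin 2) ℝ

/-- Rotation matrix through angle `θ`. -/
noncomputable def rotM (θ : ℝ) : Mat2 := !![Real.cos θ, -Real.sin θ; Real.sin θ, Real.cos θ]

/-- The Euclidean inner product on `ℝ²`. -/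
def dot2 (a b : V2) : ℝ := a 0 * b 0 + a 1 * b 1

/-- Rotation of a plane vector by `π/2` (the "perp" operator). -/
def perp (a : V2) : V2 := ![-(a 1), a 0]

/-- A set `X` in a topological space "has dimension at most `d`" witnessed by charts:
it is a finite union of continuous injective images of open subsets of `ℝ^d`. -/
def HasParamDim {α : Type*} [TopologicalSpace α] (X : Set α) (d : ℕ) : Prop :=
  ∃ (n : ℕ) (U : Fin n → Set (Fin d → ℝ)) (par : Fin n → ((Fin d → ℝ) → α)),
    (∀ i, IsOpen (U i)) ∧ (∀ i, ContinuousOn (par i) (U i)) ∧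
    (∀ i, Set.InjOn (par i) (U i)) ∧ X = ⋃ i, par i '' U i

/-- The restriction to a subgroup `L ≤ ℤ² = Λ(Γ_k)` of the representation of `Γ_k`
(`k = 3,4,6`) with parameters `(v₁, ε)`: the lattice point `(m₁, m₂)` (coordinates with
respect to the generators `t₁` and `r_k t₁ r_k⁻¹`) is sent to `m₁ v₁ + m₂ R_k^ε v₁`. -/
noncomputable def resHigher (θ : ℝ) (v₁ : V2) (L : AddSubgroup (Fin 2 → ℤ)) :
    ↥L → V2 :=
  fun m => (((m : Fin 2 → ℤ) 0 : ℝ)) • v₁ + (((m : Fin 2 → ℤ) 1 : ℝ)) • (rotM θ).mulVec v₁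

/-- The restriction to `L ≤ ℤ²` of the representation of `Γ₂` with parameters
`(v₁, v₂)`: `(m₁, m₂) ↦ m₁ v₁ + m₂ v₂`. -/
noncomputable def resTwo (v₁ v₂ : V2) (L : AddSubgroup (Fin 2 → ℤ)) : ↥L → V2 :=
  fun m => (((m : Fin 2 → ℤ) 0 : ℝ)) • v₁ + (((m : Fin 2 → ℤ) 1 : ℝ)) • v₂

/-- The restricted representation space `Rep_{Γ_k}(Γ')` for `k = 3,4,6`: restrictions to
`Γ' = L` of the discrete faithful representations of `Γ_k`, which are parametrized by
`(v₁, w, ε)` with `v₁ ≠ 0`, `ε = ±1` (the restriction does not depend on `w`). -/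
noncomputable def XHigher (k : ℕ) (L : AddSubgroup (Fin 2 → ℤ)) : Set (↥L → V2) :=
  {f | ∃ (v₁ : V2) (ε : ℤ), v₁ ≠ 0 ∧ (ε = 1 ∨ ε = -1) ∧
    f = resHigher (ε * (2 * Real.pi / k)) v₁ L}

/-- The restricted representation space `Rep_{Γ₂}(Γ')`: restrictions to `Γ' = L` of the
discrete faithful representations of `Γ₂`, parametrized by linearly independent
`(v₁, v₂)` (and `w`, on which the restriction does not depend). -/
noncomputable def XTwo (L : AddSubgroup (Fin 2 → ℤ)) : Set (↥L → V2) :=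
  {f | ∃ v₁ v₂ : V2, LinearIndependent ℝ ![v₁, v₂] ∧ f = resTwo v₁ v₂ L}

/-!
Upper bounds come from explicit charts: `v₁ ↦ resHigher θ v₁ L` is injective because
`m₁ + m₂ R_θ` is invertible for `m ≠ 0`, and for `k = 2` a `ℤ`-basis of `Γ'` of length `r`
identifies the restrictions with an open subset of `(ℝ²)^r`.

For the lower bounds, cover the target by countably many images of compact sets under
lower-dimensional charts. By Baire's theorem one of them contains the image of an open set, so a
closed ball of `E` embeds into a space `F` of smaller dimension. Let `h : F → E` be a smooth
approximation of a continuous left inverse of this embedding `f`. The range of `h` has dense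
complement for reasons of Hausdorff dimension, so it misses a small vector `p`, and the fixed point
given by Brouwer's theorem for `x ↦ x - h (f x) + p` yields the contradiction `h (f x) = p`.

Brouwer's theorem is obtained as in Milnor and Rogers. If `g` is Lipschitz and vanishes off `Ω`,
then for small `t` the map `id + t g` permutes `Ω`, so its Jacobian determinant has integral `μ Ω`;
this integral is a polynomial in `t`, so it is also `μ Ω` at `t = 1`. A `C¹` retraction of the ball
onto the sphere would have vanishing Jacobian determinant.
-/

section

open MeasureTheory Metric Set Module
open scoped NNReal

/-! ### Brouwer's fixed point theorem -/

open Polynomial in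
theorem exists_polynomial_eval_eq_det_id_add_smul {E : Type*} [NormedAddCommGroup E]
    [NormedSpace ℝ E] [FiniteDimensional ℝ E] (A : E →L[ℝ] E) :
    ∃ p : ℝ[X], p.natDegree ≤ finrank ℝ E ∧
      ∀ t : ℝ, p.eval t = (ContinuousLinearMap.id ℝ E + t • A).det := by
  let b := finBasis ℝ E
  let M := LinearMap.toMatrix b b A
  refine ⟨((X : ℝ[X]) • M.map C + (1 : Matrix _ _ ℝ).map C).det,
    by simpa using natDegree_det_X_add_C_le M 1, fun t ↦ ?_⟩
  have eval_entries : (evalRingHom t).mapMatrix ((X : ℝ[X]) • M.map C + (1 : Matrix _ _ ℝ).map C) =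
      t • M + 1 := by
    ext i j
    obtain rfl | hij := eq_or_ne i j
    · simpa using mul_comm _ _
    · simpa [hij] using mul_comm _ _
  rw [ContinuousLinearMap.det, ← LinearMap.det_toMatrix b, ← coe_evalRingHom, RingHom.map_det,
    eval_entries]
  simp [M, add_comm]

open Polynomial in
theorem exists_extrapolation_weights (n : ℕ) {ε : ℝ} (hε : 0 < ε) :
    ∃ s w : Fin (n + 1) → ℝ, (∀ i, 0 ≤ s i ∧ s i < ε) ∧
      ∀ p : ℝ[X], p.natDegree ≤ n → p.eval 1 = ∑ i, w i * p.eval (s i) := by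
  let s : Fin (n + 1) → ℝ := fun i ↦ ε * (i / (n + 1))
  have hs : Set.InjOn s (Finset.univ : Finset (Fin (n + 1))) := fun i _ j _ hij ↦ by
    have : (n : ℝ) + 1 ≠ 0 := by positivity
    simpa [s, hε.ne', div_left_inj' this, Fin.val_inj] using hij
  refine ⟨s, fun i ↦ (Lagrange.basis Finset.univ s i).eval 1, fun i ↦ ⟨by positivity, ?_⟩,
    fun p hp ↦ ?_⟩
  · refine mul_lt_of_lt_one_right hε ((div_lt_one (by positivity)).2 ?_)
    exact_mod_cast i.is_lt
  · have hdeg : p.degree < (Finset.univ : Finset (Fin (n + 1))).card := by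
      rw [Finset.card_univ, Fintype.card_fin]
      exact p.degree_le_natDegree.trans_lt (by exact_mod_cast Nat.lt_succ_of_le hp)
    conv_lhs => rw [Lagrange.eq_interpolate hs hdeg]
    simp [Lagrange.interpolate_apply, eval_finsetSum, mul_comm]

theorem exists_det_extrapolation_weights (E : Type*) [NormedAddCommGroup E] [NormedSpace ℝ E]
    [FiniteDimensional ℝ E] {ε : ℝ} (hε : 0 < ε) :
    ∃ s w : Fin (finrank ℝ E + 1) → ℝ, (∀ i, 0 ≤ s i ∧ s i < ε) ∧ ∑ i, w i = 1 ∧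
      ∀ A : E →L[ℝ] E, (ContinuousLinearMap.id ℝ E + A).det =
        ∑ i, w i * (ContinuousLinearMap.id ℝ E + s i • A).det := by
  obtain ⟨s, w, hs, hw⟩ := exists_extrapolation_weights (finrank ℝ E) hε
  refine ⟨s, w, hs, by simpa using (hw 1 (by simp)).symm, fun A ↦ ?_⟩
  obtain ⟨p, hp, heval⟩ := exists_polynomial_eval_eq_det_id_add_smul A
  simpa [heval] using hw p hp

section JacobianIntegral

variable {E : Type*} [NormedAddCommGroup E] [NormedSpace ℝ E]

theorem exists_forall_norm_lt_det_id_add_pos :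
    ∃ δ > 0, ∀ B : E →L[ℝ] E, ‖B‖ < δ → 0 < (ContinuousLinearMap.id ℝ E + B).det := by
  have hcont : Continuous fun B : E →L[ℝ] E ↦ (ContinuousLinearMap.id ℝ E + B).det :=
    ContinuousLinearMap.continuous_det.comp (continuous_const_add _)
  have hpos : ∀ᶠ B : E →L[ℝ] E in nhds 0, 0 < (ContinuousLinearMap.id ℝ E + B).det :=
    hcont.continuousAt.eventually_const_lt (by simp [ContinuousLinearMap.det])
  simpa using Metric.eventually_nhds_iff.1 hpos

theorem bijective_id_add_of_lipschitzWith [CompleteSpace E] {g : E → E} {K : ℝ≥0}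
    (hg : LipschitzWith K g) (hK : K < 1) : Function.Bijective fun x ↦ x + g x := by
  have happrox : ApproximatesLinearOn (fun x ↦ x + g x)
      (ContinuousLinearEquiv.refl ℝ E : E →L[ℝ] E) univ K := by
    rw [ApproximatesLinearOn.approximatesLinearOn_iff_lipschitzOnWith, lipschitzOnWith_univ]
    convert hg using 1
    ext x
    simp
  have hcontr : Subsingleton E ∨ K < ‖((ContinuousLinearEquiv.refl ℝ E).symm : E →L[ℝ] E)‖₊⁻¹ := by
    rcases subsingleton_or_nontrivial E with hE | hE
    · exact .inl hE
    · exact .inr (by simpa using hK)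
  exact ⟨injOn_univ.1 (happrox.injOn hcontr), happrox.surjective hcontr⟩

variable [FiniteDimensional ℝ E] [MeasurableSpace E] [BorelSpace E] (μ : Measure E)
  [μ.IsAddHaarMeasure]

theorem setIntegral_det_id_add_of_lipschitzWith_lt_one {g : E → E} {g' : E → E →L[ℝ] E}
    {K : ℝ≥0} {Ω : Set E}
    (hg : LipschitzWith K g) (hK : K < 1) (hΩ : IsOpen Ω) (hg0 : ∀ x ∉ Ω, g x = 0)
    (hg' : ∀ x ∈ Ω, HasFDerivAt g (g' x) x)
    (hpos : ∀ x ∈ Ω, 0 < (ContinuousLinearMap.id ℝ E + g' x).det) (hfin : μ Ω ≠ ⊤) :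
    IntegrableOn (fun x ↦ (ContinuousLinearMap.id ℝ E + g' x).det) Ω μ ∧
    ∫ x in Ω, (ContinuousLinearMap.id ℝ E + g' x).det ∂μ = μ.real Ω := by
  set F : E → E := fun x ↦ x + g x
  have hF : Function.Bijective F := bijective_id_add_of_lipschitzWith hg hK
  have hF' : ∀ x ∈ Ω, HasFDerivWithinAt F (ContinuousLinearMap.id ℝ E + g' x) Ω x := fun x hx ↦
    ((hasFDerivAt_id x).add (hg' x hx)).hasFDerivWithinAt
  have himage : F '' Ω = Ω := by
    have hcompl : F '' Ωᶜ = Ωᶜ := by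
      have : EqOn F id Ωᶜ := fun x hx ↦ by simp [F, hg0 x hx]
      rw [this.image_eq, image_id]
    rw [← compl_inj_iff, ← image_compl_eq hF, hcompl]
  have habs : EqOn (fun x ↦ |(ContinuousLinearMap.id ℝ E + g' x).det| • (1 : ℝ))
      (fun x ↦ (ContinuousLinearMap.id ℝ E + g' x).det) Ω := fun x hx ↦ by
    simp [abs_of_pos (hpos x hx)]
  constructor
  · rw [← integrableOn_congr_fun habs hΩ.measurableSet,
      ← integrableOn_image_iff_integrableOn_abs_det_fderiv_smul μ hΩ.measurableSet hF'
      hF.injective.injOn fun _ ↦ (1 : ℝ), himage]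
    exact integrableOn_const hfin
  · rw [← setIntegral_congr_fun hΩ.measurableSet habs,
      ← integral_image_eq_integral_abs_det_fderiv_smul μ hΩ.measurableSet hF'
      hF.injective.injOn fun _ ↦ (1 : ℝ), himage]
    simp

theorem setIntegral_det_id_add_eq_measureReal {g : E → E} {g' : E → E →L[ℝ] E}
    {K : ℝ≥0} {Ω : Set E}
    (hg : LipschitzWith K g) (hΩ : IsOpen Ω) (hg0 : ∀ x ∉ Ω, g x = 0)
    (hg' : ∀ x ∈ Ω, HasFDerivAt g (g' x) x) (hfin : μ Ω ≠ ⊤) :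
    ∫ x in Ω, (ContinuousLinearMap.id ℝ E + g' x).det ∂μ = μ.real Ω := by
  obtain ⟨δ, hδ, hdet⟩ := exists_forall_norm_lt_det_id_add_pos (E := E)
  obtain ⟨s, w, hs, hw, hextra⟩ := exists_det_extrapolation_weights E
    (ε := min 1 δ / (K + 1)) (by positivity)
  have hsmall : ∀ i, s i * K < min 1 δ := fun i ↦ by
    have := (lt_div_iff₀ (by positivity)).1 (hs i).2
    linarith [(hs i).1]
  have hnode : ∀ i, IntegrableOn (fun x ↦ (ContinuousLinearMap.id ℝ E + s i • g' x).det) Ω μ ∧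
      ∫ x in Ω, (ContinuousLinearMap.id ℝ E + s i • g' x).det ∂μ = μ.real Ω := fun i ↦ by
    refine setIntegral_det_id_add_of_lipschitzWith_lt_one μ
      (g := fun x ↦ s i • g x) (K := ‖s i‖₊ * K)
      ((lipschitzWith_smul (s i)).comp hg) ?_ hΩ
      (fun x hx ↦ by simp [hg0 x hx]) (fun x hx ↦ (hg' x hx).const_smul (s i))
      (fun x hx ↦ hdet _ ?_) hfin
    · rw [← NNReal.coe_lt_coe]
      simpa [abs_of_nonneg (hs i).1] using (hsmall i).trans_le (min_le_left _ _)
    · calc ‖s i • g' x‖ = s i * ‖g' x‖ := by rw [norm_smul, Real.norm_of_nonneg (hs i).1]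
        _ ≤ s i * K := by gcongr; exacts [(hs i).1, (hg' x hx).le_of_lipschitz hg]
        _ < δ := (hsmall i).trans_le (min_le_right _ _)
  calc ∫ x in Ω, (ContinuousLinearMap.id ℝ E + g' x).det ∂μ
      = ∫ x in Ω, ∑ i, w i * (ContinuousLinearMap.id ℝ E + s i • g' x).det ∂μ := by
        simp only [← hextra]
    _ = ∑ i, w i * ∫ x in Ω, (ContinuousLinearMap.id ℝ E + s i • g' x).det ∂μ := by
        rw [integral_finsetSum _ fun i _ ↦ (hnode i).1.const_mul (w i)]
        simp_rw [integral_const_mul]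
    _ = μ.real Ω := by simp_rw [(hnode _).2, ← Finset.sum_mul, hw, one_mul]

end JacobianIntegral

theorem lipschitzWith_indicator_of_eq_zero_on_frontier {E F : Type*}
    [NormedAddCommGroup E] [NormedSpace ℝ E] [FiniteDimensional ℝ E] [NormedAddCommGroup F]
    {s : Set E} {f : E → F} {K : ℝ≥0}
    (hf : LipschitzOnWith K f s) (hs : IsClosed s) (hfs : ∀ x ∈ frontier s, f x = 0) :
    LipschitzWith K (s.indicator f) := by
  have cross : ∀ x ∈ s, ∀ y ∉ s, ‖f x‖ ≤ K * dist x y := fun x hx y hy ↦ by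
    obtain ⟨z, hz, hxz⟩ := exists_mem_frontier_infDist_compl_eq_dist hx
      ((ne_univ_iff_exists_notMem s).2 ⟨y, hy⟩)
    calc ‖f x‖ = dist (f x) (f z) := by simp [hfs z hz]
      _ ≤ K * dist x z := hf.dist_le_mul x hx z (hs.frontier_subset hz)
      _ ≤ K * dist x y := by rw [← hxz]; gcongr; exact infDist_le_dist_of_mem hy
  refine LipschitzWith.of_dist_le_mul fun x y ↦ ?_
  by_cases hx : x ∈ s <;> by_cases hy : y ∈ s
  · simpa [hx, hy] using hf.dist_le_mul x hx y hy
  · simpa [hx, hy] using cross x hx y hy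
  · simpa [hx, hy, dist_comm] using cross y hy x hx
  · simpa [hx, hy] using by positivity

theorem det_eq_zero_of_hasFDerivAt_of_norm_eq_const {E : Type*} [NormedAddCommGroup E]
    [InnerProductSpace ℝ E] [FiniteDimensional ℝ E]
    {f : E → E} {f' : E →L[ℝ] E} {x : E} {c : ℝ} (hf : HasFDerivAt f f' x)
    (hc : ∀ᶠ y in nhds x, ‖f y‖ = c) (hx : f x ≠ 0) : f'.det = 0 := by
  have horth : ∀ v, inner ℝ (f x) (f' v) = 0 := fun v ↦ by
    have hconst : HasFDerivAt (fun y ↦ ‖f y‖ ^ 2) (0 : E →L[ℝ] ℝ) x :=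
      (hasFDerivAt_const (c ^ 2) x).congr_of_eventuallyEq (hc.mono fun y hy ↦ by simp [hy])
    simpa [hc.self_of_nhds] using DFunLike.congr_fun (hf.norm_sq.unique hconst) v
  by_contra hdet
  obtain ⟨v, hv⟩ := ((LinearMap.equivOfDetNeZero _ hdet).surjective (f x))
  exact hx (inner_self_eq_zero.1 (hv ▸ horth v))

section Brouwer

variable {E : Type*} [NormedAddCommGroup E] [InnerProductSpace ℝ E] [FiniteDimensional ℝ E]

theorem not_contDiff_retraction_sphere {r : E → E} (hr : ContDiff ℝ 1 r)
    (hnorm : ∀ x, ‖r x‖ = 1) (hfix : ∀ x, ‖x‖ = 1 → r x = x) : False := by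
  borelize E
  let μ : Measure E := Measure.addHaar
  let g : E → E := (closedBall 0 1).indicator fun x ↦ r x - x
  have hsphere : ∀ x ∈ frontier (closedBall (0 : E) 1), r x - x = 0 := fun x hx ↦
    sub_eq_zero.2 (hfix x (by simpa [frontier_closedBall] using hx))
  obtain ⟨K, hK⟩ := (hr.sub contDiff_id).contDiffOn.exists_lipschitzOnWith one_ne_zero
    (convex_closedBall (0 : E) 1) (isCompact_closedBall 0 1)
  have hg : LipschitzWith K g :=
    lipschitzWith_indicator_of_eq_zero_on_frontier hK isClosed_closedBall hsphere
  have hg0 : ∀ x ∉ ball (0 : E) 1, g x = 0 := fun x hx ↦ by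
    refine indicator_apply_eq_zero.2 fun hx' ↦ sub_eq_zero.2 (hfix x ?_)
    simp only [mem_closedBall_zero_iff, mem_ball_zero_iff, not_lt] at hx hx'
    exact hx'.antisymm hx
  have hg' : ∀ x ∈ ball (0 : E) 1,
      HasFDerivAt g (fderiv ℝ r x - ContinuousLinearMap.id ℝ E) x := fun x hx ↦ by
    refine ((hr.differentiable one_ne_zero x).hasFDerivAt.sub
      (hasFDerivAt_id x)).congr_of_eventuallyEq ?_
    filter_upwards [isOpen_ball.mem_nhds hx] with y hy
      using indicator_of_mem (ball_subset_closedBall hy) _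
  have hdet : ∀ x, (fderiv ℝ r x).det = 0 := fun x ↦
    det_eq_zero_of_hasFDerivAt_of_norm_eq_const (hr.differentiable one_ne_zero x).hasFDerivAt
      (.of_forall hnorm) (norm_ne_zero_iff.1 (by simp [hnorm]))
  have hvol : 0 = μ.real (ball 0 1) := by
    simpa [hdet] using
      setIntegral_det_id_add_eq_measureReal μ hg isOpen_ball hg0 hg' measure_ball_lt_top.ne
  exact (ENNReal.toReal_pos (measure_ball_pos μ 0 one_pos).ne' measure_ball_lt_top.ne).ne hvol

theorem exists_eq_zero_of_eq_self_of_le_norm {f : E → E} (hf : Continuous f)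
    {R : ℝ} (hR : 0 < R) (hfix : ∀ x, R ≤ ‖x‖ → f x = x) : ∃ x, f x = 0 := by
  by_contra! h0
  have hfS : ContDiffOn ℝ (1 : ℕ∞) f (closedBall 0 R)ᶜ :=
    contDiffOn_id.congr fun x hx ↦ hfix x (by simpa using (not_le.1 (by simpa using hx)).le)
  obtain ⟨g, hg, hgf, hgS, -⟩ := hf.exists_contDiff_approx_and_eqOn 1 hf.norm
    (fun x ↦ norm_pos_iff.2 (h0 x)) (isOpen_ball (x := (0 : E)) (ε := 2 * R)).isClosed_compl
    (isClosed_closedBall.isOpen_compl.mem_nhdsSet.2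
      (compl_subset_compl.2 (closedBall_subset_ball (by linarith)))) hfS
  have hg0 : ∀ x, g x ≠ 0 := fun x hx ↦ by simpa [hx] using hgf x
  refine not_contDiff_retraction_sphere (r := fun x ↦ NormedSpace.normalize (g ((2 * R) • x)))
    ?_ (fun x ↦ NormedSpace.norm_normalize_eq_one_iff.2 (hg0 _)) fun x hx ↦ ?_
  · have hg2 : ContDiff ℝ 1 fun x ↦ g ((2 * R) • x) := hg.comp (contDiff_const_smul _)
    exact ((hg2.norm ℝ fun x ↦ hg0 _).inv fun x ↦ norm_ne_zero_iff.2 (hg0 _)).smul hg2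
  · have hx2 : ‖(2 * R) • x‖ = 2 * R := by rw [norm_smul, hx, Real.norm_of_nonneg] <;> linarith
    rw [hgS (by simp [hx2]), hfix _ (by linarith), NormedSpace.normalize_smul_of_pos (by linarith),
      NormedSpace.normalize_eq_self_of_norm_eq_one hx]

theorem exists_isFixedPt_of_norm_le {f : E → E} (hf : Continuous f) {R : ℝ}
    (hfR : ∀ x, ‖f x‖ ≤ R) : ∃ x, Function.IsFixedPt f x := by
  have hR : 0 ≤ R := (norm_nonneg _).trans (hfR 0)
  let χ : E → ℝ := fun x ↦ max 0 (min 1 (R + 1 - ‖x‖))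
  have hχ : ∀ x, 0 ≤ χ x ∧ χ x ≤ 1 := fun x ↦ ⟨le_max_left _ _, by simp [χ]⟩
  obtain ⟨x, hx⟩ := exists_eq_zero_of_eq_self_of_le_norm
    (f := fun x ↦ x - χ x • f x) (by fun_prop) (R := R + 1) (by linarith) fun x hx ↦ by
      simp [χ, hx]
  have hxR : ‖x‖ ≤ R := calc
    ‖x‖ = χ x * ‖f x‖ := by
      rw [sub_eq_zero.1 hx, norm_smul, Real.norm_of_nonneg (hχ _).1, ← sub_eq_zero.1 hx]
    _ ≤ 1 * R := by gcongr; exacts [(hχ x).2, hfR x]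
    _ = R := one_mul R
  have hχ1 : χ x = 1 := by
    have hle : 1 ≤ R + 1 - ‖x‖ := by linarith
    simp [χ, hle]
  exact ⟨x, by simpa [hχ1, sub_eq_zero, Function.IsFixedPt, eq_comm] using hx⟩

theorem exists_isFixedPt_of_closedBall {R : ℝ} (hR : 0 < R)
    {f : closedBall (0 : E) R → closedBall (0 : E) R} (hf : Continuous f) :
    ∃ x, Function.IsFixedPt f x := by
  have := Metric.instTietzeExtensionClosedBall ℝ (0 : E) hR
  obtain ⟨g, hg⟩ := ContinuousMap.exists_restrict_eq isClosed_closedBall ⟨f, hf⟩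
  obtain ⟨x, hx⟩ := exists_isFixedPt_of_norm_le (f := fun x ↦ (g x : E)) (by fun_prop)
    fun x ↦ mem_closedBall_zero_iff.1 (g x).2
  have hxR : x ∈ closedBall (0 : E) R := hx ▸ (g x).2
  refine ⟨⟨x, hxR⟩, Subtype.ext ?_⟩
  have hfg : f ⟨x, hxR⟩ = g x := (DFunLike.congr_fun hg ⟨x, hxR⟩).symm
  exact (congrArg Subtype.val hfg).trans hx

end Brouwer

/-! ### Dimension of sets parametrized by charts -/

theorem finrank_le_of_closedBall_injective {E F : Type*}
    [NormedAddCommGroup E] [InnerProductSpace ℝ E] [FiniteDimensional ℝ E]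
    [NormedAddCommGroup F] [NormedSpace ℝ F] [FiniteDimensional ℝ F] {R : ℝ} (hR : 0 < R)
    {f : closedBall (0 : E) R → F} (hf : Continuous f) (hinj : Function.Injective f) :
    finrank ℝ E ≤ finrank ℝ F := by
  by_contra! hlt
  obtain ⟨φ, hφ⟩ := ContinuousMap.exists_extension (hf.isClosedEmbedding hinj)
    ⟨Subtype.val, continuous_subtype_val⟩
  have hφf : ∀ x, φ (f x) = x := DFunLike.congr_fun hφ
  obtain ⟨h, hh, hhφ, -⟩ := φ.continuous.exists_contDiff_approx 1
    (continuous_const (y := R / 2)) fun _ ↦ half_pos hR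
  obtain ⟨p, hp, hp_small⟩ := (hh.dense_compl_range_of_finrank_lt_finrank hlt).exists_dist_lt 0
    (half_pos hR)
  have hmem : ∀ x : closedBall (0 : E) R, x - h (f x) + p ∈ closedBall (0 : E) R := fun x ↦ by
    have hx : ‖(x : E) - h (f x)‖ < R / 2 := by
      rw [← dist_eq_norm, dist_comm, ← hφf x]
      simpa [hφf] using hhφ (f x)
    rw [mem_closedBall_zero_iff]
    calc ‖(x : E) - h (f x) + p‖ ≤ R / 2 + R / 2 := by
          rw [dist_zero_left] at hp_small
          exact norm_add_le_of_le hx.le hp_small.le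
      _ = R := add_halves R
  obtain ⟨x, hx⟩ := exists_isFixedPt_of_closedBall hR
    (f := fun x ↦ ⟨x - h (f x) + p, hmem x⟩)
    (((continuous_subtype_val.sub (hh.continuous.comp hf)).add continuous_const).subtype_mk _)
  refine hp ⟨f x, ?_⟩
  have hx : (x : E) - h (f x) + p = x := congrArg Subtype.val hx
  simpa [sub_add, sub_eq_zero] using hx

theorem finrank_le_of_continuous_injective {E F : Type*} [NormedAddCommGroup E] [NormedSpace ℝ E]
    [FiniteDimensional ℝ E] [NormedAddCommGroup F] [NormedSpace ℝ F] [FiniteDimensional ℝ F]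
    {s : Set E} (hs : (interior s).Nonempty) {f : E → F} (hf : ContinuousOn f s)
    (hinj : InjOn f s) :
    finrank ℝ E ≤ finrank ℝ F := by
  let e := toEuclidean (E := E)
  obtain ⟨x, hx⟩ := hs
  let g : EuclideanSpace ℝ (Fin (finrank ℝ E)) → E := fun y ↦ x + e.symm y
  have hg : Continuous g := by fun_prop
  obtain ⟨R, hR, hball⟩ := nhds_basis_closedBall.mem_iff.1 <|
    hg.continuousAt.preimage_mem_nhds (x := 0) (by simpa [g] using mem_interior_iff_mem_nhds.1 hx)
  have hginj : InjOn (f ∘ g) (closedBall 0 R) := fun y hy z hz hyz ↦ by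
    simpa [g] using hinj (hball hy) (hball hz) hyz
  simpa using finrank_le_of_closedBall_injective hR (hf.comp hg.continuousOn hball).domRestrict
    (injOn_iff_injective.1 hginj)

theorem exists_interior_inter_preimage_nonempty {X Y ι : Type*} [TopologicalSpace X] [BaireSpace X]
    [TopologicalSpace Y] [Countable ι] {f : X → Y} {W : Set X} (hW : IsOpen W) (hne : W.Nonempty)
    (hf : ContinuousOn f W) {K : ι → Set Y} (hK : ∀ i, IsClosed (K i))
    (hfK : MapsTo f W (⋃ i, K i)) :
    ∃ i, (interior (W ∩ f ⁻¹' K i)).Nonempty := by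
  have := hW.baireSpace
  have := hne.to_subtype
  obtain ⟨i, w, hw⟩ := nonempty_interior_of_iUnion_of_closed
    (f := fun i ↦ W.domRestrict f ⁻¹' K i) (fun i ↦ (hK i).preimage hf.domRestrict) (by
      rw [← preimage_iUnion]
      exact eq_univ_of_forall fun w ↦ hfK w.2)
  refine ⟨i, w, mem_interior.2 ⟨Subtype.val '' interior (W.domRestrict f ⁻¹' K i), ?_,
    hW.isOpenMap_subtype_val _ isOpen_interior, mem_image_of_mem _ hw⟩⟩
  rintro _ ⟨x, hx, rfl⟩
  exact ⟨x.2, (interior_subset hx : x ∈ W.domRestrict f ⁻¹' K i)⟩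

theorem continuousOn_invFunOn_of_isCompact {X Y : Type*} [TopologicalSpace X] [Nonempty X]
    [TopologicalSpace Y] [T2Space Y] {f : X → Y} {K : Set X} (hK : IsCompact K)
    (hf : ContinuousOn f K) (hinj : InjOn f K) :
    ContinuousOn (Function.invFunOn f K) (f '' K) := by
  have := isCompact_iff_compactSpace.1 hK
  have hemb := hf.domRestrict.isClosedEmbedding (injOn_iff_injective.1 hinj)
  rw [continuousOn_iff_isClosed]
  intro t ht
  refine ⟨f '' (t ∩ K), ?_, ?_⟩
  · convert hemb.isClosedMap _ (ht.preimage continuous_subtype_val) using 1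
    ext y
    simp [domRestrict, and_comm]
  · ext y
    constructor
    · rintro ⟨hy, x, hx, rfl⟩
      rw [mem_preimage, hinj.leftInvOn_invFunOn hx] at hy
      exact ⟨⟨x, ⟨hy, hx⟩, rfl⟩, ⟨x, hx, rfl⟩⟩
    · rintro ⟨⟨x, ⟨hxt, hx⟩, rfl⟩, hy⟩
      exact ⟨by rwa [mem_preimage, hinj.leftInvOn_invFunOn hx], hy⟩

theorem isSigmaCompact_of_isOpen {X : Type*} [TopologicalSpace X] [LocallyCompactSpace X]
    [SecondCountableTopology X] {U : Set X} (hU : IsOpen U) : IsSigmaCompact U := by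
  have := hU.locallyCompactSpace
  exact isSigmaCompact_iff_isSigmaCompact_univ.2 isSigmaCompact_univ

theorem HasParamDim.finrank_le {α E : Type*} [TopologicalSpace α] [T2Space α]
    [NormedAddCommGroup E] [NormedSpace ℝ E] [FiniteDimensional ℝ E] {X : Set α} {d : ℕ}
    (hX : HasParamDim X d) {Φ : E → α} {W : Set E} (hW : IsOpen W) (hne : W.Nonempty)
    (hΦ : ContinuousOn Φ W) (hinj : InjOn Φ W) (hmaps : MapsTo Φ W X) : finrank ℝ E ≤ d := by
  obtain ⟨n, U, par, hU, hpar, hparinj, rfl⟩ := hX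
  choose C hC hCU using fun i ↦ isSigmaCompact_of_isOpen (hU i)
  have hsub : ∀ i m, C i m ⊆ U i := fun i m ↦ hCU i ▸ subset_iUnion (C i) m
  have hcover : ⋃ i, par i '' U i = ⋃ j : Fin n × ℕ, par j.1 '' C j.1 j.2 := by
    simp_rw [← hCU, image_iUnion, iUnion_prod']
  obtain ⟨⟨i, m⟩, hint⟩ := exists_interior_inter_preimage_nonempty hW hne hΦ
    (fun j : Fin n × ℕ ↦ ((hC j.1 j.2).image_of_continuousOn
      ((hpar j.1).mono (hsub j.1 j.2))).isClosed) (hcover ▸ hmaps)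
  have hinv := continuousOn_invFunOn_of_isCompact (hC i m) ((hpar i).mono (hsub i m))
    ((hparinj i).mono (hsub i m))
  have hright : RightInvOn (Function.invFunOn (par i) (C i m)) (par i) (par i '' C i m) :=
    (surjOn_image _ _).rightInvOn_invFunOn
  have hle := finrank_le_of_continuous_injective hint
    (hinv.comp (hΦ.mono inter_subset_left) fun _ hx ↦ hx.2)
    (hright.injOn.comp (hinj.mono inter_subset_left) fun _ hx ↦ hx.2)
  simpa using hle

theorem hasParamDim_iUnion_image {α E ι : Type*} [TopologicalSpace α] [NormedAddCommGroup E]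
    [NormedSpace ℝ E] [FiniteDimensional ℝ E] [Finite ι] {Φ : ι → E → α} {W : ι → Set E}
    (hW : ∀ i, IsOpen (W i)) (hΦ : ∀ i, ContinuousOn (Φ i) (W i)) (hinj : ∀ i, InjOn (Φ i) (W i)) :
    HasParamDim (⋃ i, Φ i '' W i) (finrank ℝ E) := by
  obtain ⟨n, ⟨e⟩⟩ := Finite.exists_equiv_fin ι
  let c : (Fin (finrank ℝ E) → ℝ) ≃L[ℝ] E := (ContinuousLinearEquiv.ofFinrankEq (by simp)).symm
  refine ⟨n, fun i ↦ c ⁻¹' W (e.symm i), fun i ↦ Φ (e.symm i) ∘ c,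
    fun i ↦ (hW _).preimage c.continuous,
    fun i ↦ (hΦ _).comp c.continuous.continuousOn (mapsTo_preimage _ _),
    fun i ↦ (hinj _).comp c.injective.injOn (mapsTo_preimage _ _), ?_⟩
  simp_rw [image_comp, image_preimage_eq _ c.surjective]
  exact (e.symm.iSup_comp (g := fun i ↦ Φ i '' W i)).symm

/-! ### Restricted representation spaces -/

theorem continuous_resHigher (θ : ℝ) (L : AddSubgroup (Fin 2 → ℤ)) :
    Continuous fun v ↦ resHigher θ v L := by
  unfold resHigher
  fun_prop

theorem det_smul_one_add_smul_rotM (a b θ : ℝ) :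
    (a • 1 + b • rotM θ).det = (a + b * Real.cos θ) ^ 2 + (b * Real.sin θ) ^ 2 := by
  have hentries : a • 1 + b • rotM θ = !![a + b * Real.cos θ, -(b * Real.sin θ);
      b * Real.sin θ, a + b * Real.cos θ] := by
    ext i j
    fin_cases i <;> fin_cases j <;> simp [rotM]
  rw [hentries, det_fin_two_of]
  ring

theorem det_smul_one_add_smul_rotM_eq_zero_iff {a b θ : ℝ} (hθ : Real.sin θ ≠ 0) :
    (a • 1 + b • rotM θ).det = 0 ↔ a = 0 ∧ b = 0 := by
  rw [det_smul_one_add_smul_rotM, add_eq_zero_iff_of_nonneg (sq_nonneg _) (sq_nonneg _)]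
  constructor
  · rintro ⟨hcos, hsin⟩
    obtain rfl : b = 0 := by simpa [hθ] using hsin
    exact ⟨by simpa using hcos, rfl⟩
  · rintro ⟨rfl, rfl⟩
    simp

theorem resHigher_eq_mulVec (θ : ℝ) (v : V2) {L : AddSubgroup (Fin 2 → ℤ)} (m : L) :
    resHigher θ v L m =
      (((m : Fin 2 → ℤ) 0 : ℝ) • 1 + ((m : Fin 2 → ℤ) 1 : ℝ) • rotM θ) *ᵥ v := by
  simp [resHigher, add_mulVec, smul_mulVec]

theorem resHigher_injective {θ : ℝ} (hθ : Real.sin θ ≠ 0) {L : AddSubgroup (Fin 2 → ℤ)}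
    (hL : L ≠ ⊥) : Function.Injective fun v ↦ resHigher θ v L := fun v w hvw ↦ by
  obtain ⟨m, hm, hm0⟩ := L.bot_or_exists_ne_zero.resolve_left hL
  have hdet : ((m 0 : ℝ) • 1 + (m 1 : ℝ) • rotM θ).det ≠ 0 := fun h ↦ hm0 <| by
    simpa [funext_iff] using (det_smul_one_add_smul_rotM_eq_zero_iff hθ).1 h
  refine mulVec_injective_iff_isUnit.2 ((isUnit_iff_isUnit_det _).2 hdet.isUnit) ?_
  have hm_eq := congrFun hvw ⟨m, hm⟩
  simpa only [resHigher_eq_mulVec] using hm_eq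

theorem sin_units_mul_two_pi_div_ne_zero {k : ℕ} (hk : 3 ≤ k) (ε : ℤˣ) :
    Real.sin ((ε : ℤ) * (2 * Real.pi / k)) ≠ 0 := by
  have hk' : (3 : ℝ) ≤ k := by exact_mod_cast hk
  have hpos : 0 < Real.sin (2 * Real.pi / k) := Real.sin_pos_of_pos_of_lt_pi (by positivity) <| by
    rw [div_lt_iff₀ (by positivity)]
    nlinarith [Real.pi_pos]
  rcases Int.units_eq_one_or ε with rfl | rfl
  · simpa using hpos.ne'
  · simpa [neg_div] using hpos.ne'

theorem XHigher_eq_iUnion_image (k : ℕ) (L : AddSubgroup (Fin 2 → ℤ)) :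
    XHigher k L = ⋃ ε : ℤˣ,
      (fun v ↦ resHigher ((ε : ℤ) * (2 * Real.pi / k)) v L) '' {v | v ≠ 0} := by
  ext f
  simp only [XHigher, mem_ofPred_eq, mem_iUnion, mem_image]
  constructor
  · rintro ⟨v, ε, hv, hε, rfl⟩
    obtain ⟨u, rfl⟩ : IsUnit ε := Int.isUnit_iff.2 hε
    exact ⟨u, v, hv, rfl⟩
  · rintro ⟨u, v, hv, rfl⟩
    exact ⟨v, u, hv, Int.isUnit_iff.1 u.isUnit, rfl⟩

theorem hasParamDim_XHigher {k : ℕ} (hk : 3 ≤ k) {L : AddSubgroup (Fin 2 → ℤ)} (hL : L ≠ ⊥) :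
    HasParamDim (XHigher k L) 2 := by
  rw [XHigher_eq_iUnion_image]
  simpa using hasParamDim_iUnion_image (fun _ : ℤˣ ↦ isOpen_ne)
    (fun _ ↦ (continuous_resHigher _ L).continuousOn)
    fun ε ↦ (resHigher_injective (sin_units_mul_two_pi_div_ne_zero hk ε) hL).injOn

theorem two_le_of_hasParamDim_XHigher {k d : ℕ} (hk : 3 ≤ k) {L : AddSubgroup (Fin 2 → ℤ)}
    (hL : L ≠ ⊥) (hX : HasParamDim (XHigher k L) d) : 2 ≤ d := by
  have hle := hX.finrank_le isOpen_ne (exists_ne (0 : V2))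
    (continuous_resHigher _ L).continuousOn
    (resHigher_injective (sin_units_mul_two_pi_div_ne_zero hk 1) hL).injOn fun v hv ↦ by
      rw [XHigher_eq_iUnion_image]
      exact mem_iUnion_of_mem 1 (mem_image_of_mem _ hv)
  simpa using hle

section LatticeEval

variable {ι κ V : Type*} [Fintype κ] [AddCommGroup V] [Module ℝ V]

/-- The images of the lattice vectors `a j` under the homomorphism `ℤ^κ → V` with prescribed
values on the standard basis, as a linear function of these values. -/
def latticeEval (V : Type*) [AddCommGroup V] [Module ℝ V] (a : ι → κ → ℤ) :
    (κ → V) →ₗ[ℝ] ι → V :=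
  LinearMap.pi fun j ↦ ∑ i, (a j i : ℝ) • LinearMap.proj i

@[simp]
theorem latticeEval_apply (a : ι → κ → ℤ) (v : κ → V) (j : ι) :
    latticeEval V a v j = ∑ i, (a j i : ℝ) • v i := by
  simp [latticeEval]

theorem latticeEval_surjective {a : ι → κ → ℤ} (ha : LinearIndependent ℤ a) :
    Function.Surjective (latticeEval V a) := fun u ↦ by
  classical
  have haℝ : LinearIndependent ℝ fun j ↦ algebraMap ℤ ℝ ∘ a j :=
    linearIndependent_algebraMap_comp_iff.2 ha
  obtain ⟨f, hf⟩ := ((Basis.span haℝ).constr ℝ u).exists_extend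
  refine ⟨fun i ↦ f fun i' ↦ if i = i' then 1 else 0, funext fun j ↦ ?_⟩
  calc latticeEval V a _ j = f (algebraMap ℤ ℝ ∘ a j) :=
        (latticeEval_apply a _ j).trans (f.pi_apply_eq_sum_univ _).symm
    _ = f (Basis.span haℝ j) := by rw [Basis.span_apply]
    _ = (Basis.span haℝ).constr ℝ u (Basis.span haℝ j) := DFunLike.congr_fun hf _
    _ = u j := Basis.constr_basis _ _ _ _

end LatticeEval

theorem continuous_coe_constr {ι M V : Type*} [Finite ι] [AddCommGroup M] [AddCommGroup V]
    [TopologicalSpace V] [IsTopologicalAddGroup V] (b : Basis ι ℤ M) :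
    Continuous fun u : ι → V ↦ ⇑(b.constr ℤ u) := by
  have := Fintype.ofFinite ι
  refine continuous_pi fun m ↦ ?_
  simp_rw [Basis.constr_apply_fintype]
  fun_prop

section BasisValues

variable {L : AddSubgroup (Fin 2 → ℤ)} {ι : Type*} (b : Basis ι ℤ L)

theorem resTwo_eq_constr_latticeEval (v : Fin 2 → V2) :
    resTwo (v 0) (v 1) L = b.constr ℤ (latticeEval V2 (fun j ↦ (b j : Fin 2 → ℤ)) v) := by
  let φ : L →ₗ[ℤ] V2 := Fintype.linearCombination ℤ v ∘ₗ L.subtype.toIntLinearMap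
  have hφ : resTwo (v 0) (v 1) L = φ := by
    ext m
    simp [φ, resTwo, Fintype.linearCombination_apply]
  have hb : latticeEval V2 (fun j ↦ (b j : Fin 2 → ℤ)) v = φ ∘ b := by
    ext j
    simp [φ, Fintype.linearCombination_apply]
  rw [hφ, hb]
  exact congrArg DFunLike.coe (b.constr_self ℤ φ).symm

/-- The values that the restrictions to `L` of discrete faithful representations of `Γ₂` take on
the `ℤ`-basis `b` of `L`; they are the parameters of the chart of `XTwo L` attached to `b`. -/
def basisValues : Set (ι → V2) :=
  latticeEval V2 (fun j ↦ (b j : Fin 2 → ℤ)) '' {v | LinearIndependent ℝ v}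

theorem XTwo_eq_image_basisValues :
    XTwo L = (fun u ↦ ⇑(b.constr ℤ u)) '' basisValues b := by
  simp_rw [basisValues, image_image, ← resTwo_eq_constr_latticeEval]
  ext f
  constructor
  · rintro ⟨v₁, v₂, hv, rfl⟩
    exact ⟨![v₁, v₂], hv, rfl⟩
  · rintro ⟨v, hv, rfl⟩
    exact ⟨v 0, v 1, (FinVec.etaExpand_eq v).symm ▸ hv, rfl⟩

theorem isOpen_basisValues [Finite ι] : IsOpen (basisValues b) := by
  have := Fintype.ofFinite ι
  have hb : LinearIndependent ℤ fun j ↦ (b j : Fin 2 → ℤ) :=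
    b.linearIndependent.map' L.subtype.toIntLinearMap (LinearMap.ker_eq_bot.2 L.subtype_injective)
  exact LinearMap.isOpenMap_of_finiteDimensional _ (latticeEval_surjective hb) _
    isOpen_setOfPred_linearIndependent

theorem basisValues_nonempty : (basisValues b).Nonempty :=
  ⟨_, mem_image_of_mem _ (Pi.basisFun ℝ (Fin 2)).linearIndependent⟩

end BasisValues

instance moduleFinite_addSubgroup {M : Type*} [AddCommGroup M] [Module.Finite ℤ M]
    (L : AddSubgroup M) : Module.Finite ℤ L :=
  .of_injective L.subtype.toIntLinearMap L.subtype_injective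

theorem hasParamDim_XTwo (L : AddSubgroup (Fin 2 → ℤ)) :
    HasParamDim (XTwo L) (2 * finrank ℤ L) := by
  let b := finBasis ℤ L
  have hX := hasParamDim_iUnion_image (fun _ : Unit ↦ isOpen_basisValues b)
    (fun _ ↦ (continuous_coe_constr b).continuousOn)
    fun _ ↦ (DFunLike.coe_injective.comp (b.constr (M' := V2) ℤ).injective).injOn
  rw [iUnion_const, ← XTwo_eq_image_basisValues] at hX
  simpa [finrank_pi_fintype, mul_comm] using hX

theorem two_mul_finrank_le_of_hasParamDim_XTwo {L : AddSubgroup (Fin 2 → ℤ)} {d : ℕ}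
    (hX : HasParamDim (XTwo L) d) : 2 * finrank ℤ L ≤ d := by
  let b := finBasis ℤ L
  have hle := hX.finrank_le (isOpen_basisValues b) (basisValues_nonempty b)
    (continuous_coe_constr b).continuousOn
    (DFunLike.coe_injective.comp (b.constr (M' := V2) ℤ).injective).injOn
    (mapsTo_iff_image_subset.2 (XTwo_eq_image_basisValues b).superset)
  simpa [finrank_pi_fintype, mul_comm] using hle

theorem restricted_representation_space_dimension_general
    (k : ℕ) (hk : 2 ≤ k)
    (L : AddSubgroup (Fin 2 → ℤ)) (hL : L ≠ ⊥) :
    (k ≠ 2 → HasParamDim (XHigher k L) 2 ∧ ¬ HasParamDim (XHigher k L) 1) ∧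
    (k = 2 → HasParamDim (XTwo L) (2 * Module.finrank ℤ ↥L) ∧
      ¬ HasParamDim (XTwo L) (2 * Module.finrank ℤ ↥L - 1)) ∧
    (∃ d : ℕ, Even d ∧ HasParamDim (if k = 2 then XTwo L else XHigher k L) d) := by
  have hHigher : k ≠ 2 → HasParamDim (XHigher k L) 2 := fun hk2 ↦
    hasParamDim_XHigher (by omega) hL
  refine ⟨fun hk2 ↦ ⟨hHigher hk2, fun h ↦ ?_⟩, fun _ ↦ ⟨hasParamDim_XTwo L, fun h ↦ ?_⟩, ?_⟩
  · exact absurd (two_le_of_hasParamDim_XHigher (by omega) hL h) (by norm_num)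
  · have := L.nontrivial_iff_ne_bot.2 hL
    have hrank : 0 < finrank ℤ L := finrank_pos
    have hle := two_mul_finrank_le_of_hasParamDim_XTwo h
    omega
  · split_ifs with hk2
    exacts [⟨_, even_two_mul _, hasParamDim_XTwo L⟩, ⟨2, even_two, hHigher hk2⟩]

end

/-- **Lemma (trrep).**  Let `Γ' ≤ Λ(Γ_k)` be a nontrivial subgroup of translations of
`Γ_k`, `k ∈ {2,3,4,6}`.  For `k = 3,4,6` the space of restrictions to `Γ'` of discrete
faithful representations of `Γ_k` has dimension `2`; for `k = 2` it has dimension `2r`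
where `r` is the rank of the free abelian group `Γ'`.  In particular the dimension is
always even. -/
theorem restricted_representation_space_dimension
    (k : ℕ) (hk : k ∈ ({2, 3, 4, 6} : Set ℕ))
    (L : AddSubgroup (Fin 2 → ℤ)) (hL : L ≠ ⊥) :
    (k ≠ 2 → HasParamDim (XHigher k L) 2 ∧ ¬ HasParamDim (XHigher k L) 1) ∧
    (k = 2 → HasParamDim (XTwo L) (2 * Module.finrank ℤ ↥L) ∧
      ¬ HasParamDim (XTwo L) (2 * Module.finrank ℤ ↥L - 1)) ∧
    (∃ d : ℕ, Even d ∧ HasParamDim (if k = 2 then XTwo L else XHigher k L) d) :=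
  restricted_representation_space_dimension_general k
    (by rcases hk with rfl | rfl | rfl | rfl <;> norm_num) L hL
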